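/- arXiv:1705.09790 — 5 statements merged into one kernel-verified Lean document; each statement's English description precedes it below -/
import Mathlib

section
/- For all positive integers r and n, the Ramanujan sum satisfies C(r, n) = (φ(n) / φ(n / gcd(n, r))) · μ(n / gcd(n, r)), where φ is Euler's totient function and μ is the Möbius function. -/
/-!
The number `ζ = exp (2πi r / n)` is a primitive root of unity of order `m = n / gcd(n, r)`, so
`k ↦ ζ ^ k` only depends on `k` modulo `m`. The reduction map `(ℤ/n)ˣ → (ℤ/m)ˣ` is a surjective
group homomorphism, hence all its fibres have `φ(n) / φ(m)` elements (`sum_units_comp_unitsMap`),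
and the Ramanujan sum is `φ(n) / φ(m)` times the sum of all primitive `m`-th roots of unity. The
latter sum is `μ(m)` (`sum_primitiveRoots_complex`) by Möbius inversion, since the sum of all `m`-th
roots of unity is `1` for `m = 1` and `0` otherwise.
-/

open Finset

/-- The Ramanujan sum `C(r, n) = ∑_{1 ≤ k ≤ n, gcd(k,n) = 1} exp(2πi k r / n)`. -/
noncomputable def ramanujanSum (r n : ℕ) : ℂ :=
  ∑ k ∈ (Finset.Icc 1 n).filter (fun k => Nat.gcd k n = 1),
    Complex.exp (2 * Real.pi * Complex.I * k * r / n)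

theorem sum_nthRootsFinset_complex (n : ℕ) (hn : 0 < n) :
    ∑ z ∈ Polynomial.nthRootsFinset n (1 : ℂ), z = if n = 1 then 1 else 0 := by
  have hζ := Complex.isPrimitiveRoot_exp n hn.ne'
  have : NeZero n := ⟨hn.ne'⟩
  have key : ∑ i ∈ range n, Complex.exp (2 * Real.pi * Complex.I / n) ^ i
      = ∑ z ∈ Polynomial.nthRootsFinset n (1 : ℂ), z := by
    refine Finset.sum_bij (fun i _ => Complex.exp (2 * Real.pi * Complex.I / n) ^ i) ?_ ?_ ?_ ?_
    · intro i _
      rw [Polynomial.mem_nthRootsFinset hn, pow_right_comm, hζ.pow_eq_one, one_pow]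
    · intro i hi j hj h
      exact hζ.pow_inj (mem_range.1 hi) (mem_range.1 hj) h
    · intro z hz
      rw [Polynomial.mem_nthRootsFinset hn] at hz
      obtain ⟨i, hi, h⟩ := hζ.eq_pow_of_pow_eq_one hz
      exact ⟨i, mem_range.2 hi, h⟩
    · intro i _
      rfl
  rw [← key]
  split_ifs with h
  · subst h
    simp
  · exact hζ.geom_sum_eq_zero (by omega)

theorem sum_primitiveRoots_complex (n : ℕ) (hn : 0 < n) :
    ∑ z ∈ primitiveRoots n ℂ, z = (ArithmeticFunction.moebius n : ℂ) := by
  have h : ∀ n > 0, ∑ d ∈ n.divisors, ∑ z ∈ primitiveRoots d ℂ, z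
      = (fun n : ℕ => if n = 1 then (1 : ℂ) else 0) n := by
    intro n hn
    rw [← Finset.sum_biUnion, ← IsPrimitiveRoot.nthRoots_one_eq_biUnion_primitiveRoots]
    · exact sum_nthRootsFinset_complex n hn
    · intro a _ b _ hab
      exact IsPrimitiveRoot.disjoint hab
  rw [ArithmeticFunction.sum_eq_iff_sum_mul_moebius_eq] at h
  rw [← h n hn, Finset.sum_eq_single (n, 1)]
  · simp
  · rintro ⟨a, b⟩ hab hne
    have hab' : a * b = n := (Nat.mem_divisorsAntidiagonal.1 hab).1
    have hb : b ≠ 1 := by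
      rintro rfl
      exact hne (by simp [← hab'])
    simp [hb]
  · intro h
    exact absurd (Nat.mem_divisorsAntidiagonal.2 ⟨mul_one n, hn.ne'⟩) h

theorem sum_units_pow_eq_sum_primitiveRoots {m : ℕ} [NeZero m] {ζ : ℂ} (hζ : IsPrimitiveRoot ζ m) :
    ∑ u : (ZMod m)ˣ, ζ ^ (u : ZMod m).val = ∑ z ∈ primitiveRoots m ℂ, z := by
  refine Finset.sum_bij (fun u _ => ζ ^ (u : ZMod m).val) ?_ ?_ ?_ ?_
  · intro u _
    rw [mem_primitiveRoots (NeZero.pos m)]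
    exact hζ.pow_of_coprime _ (ZMod.val_coe_unit_coprime u)
  · intro u _ v _ h
    exact Units.ext (ZMod.val_injective m (hζ.pow_inj (ZMod.val_lt _) (ZMod.val_lt _) h))
  · intro z hz
    rw [mem_primitiveRoots (NeZero.pos m), hζ.isPrimitiveRoot_iff] at hz
    obtain ⟨i, hi, hc, h⟩ := hz
    refine ⟨ZMod.unitOfCoprime i hc, mem_univ _, ?_⟩
    rw [ZMod.coe_unitOfCoprime, ZMod.val_natCast_of_lt hi, h]
  · intro u _
    rfl

/-- All fibres of the surjection `(ℤ/n)ˣ → (ℤ/m)ˣ` have `φ(n) / φ(m)` elements. -/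
theorem sum_units_comp_unitsMap {m n : ℕ} [NeZero m] [NeZero n] (h : m ∣ n) (f : (ZMod m)ˣ → ℂ) :
    ∑ u : (ZMod n)ˣ, f (ZMod.unitsMap h u)
      = ((Nat.totient n : ℂ) / (Nat.totient m : ℂ)) * ∑ v : (ZMod m)ˣ, f v := by
  classical
  have hsurj := ZMod.unitsMap_surjective h
  have hfib : ∀ g : (ZMod m)ˣ → ℂ, ∑ u : (ZMod n)ˣ, g (ZMod.unitsMap h u)
      = (#{u : (ZMod n)ˣ | ZMod.unitsMap h u = 1} : ℂ) * ∑ v, g v := by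
    intro g
    rw [← Finset.sum_fiberwise univ (fun u => ZMod.unitsMap h u), Finset.mul_sum]
    refine Finset.sum_congr rfl fun v _ => ?_
    rw [← MonoidHom.card_fiber_eq_of_mem_range (ZMod.unitsMap h) (hsurj v) (hsurj 1),
      ← nsmul_eq_mul, ← Finset.sum_const]
    refine Finset.sum_congr rfl fun u hu => ?_
    rw [(mem_filter.1 hu).2]
  -- The constant function `1` determines the common cardinality of the fibres.
  have hcard := hfib fun _ => 1
  simp only [Finset.sum_const, Finset.card_univ, ZMod.card_units_eq_totient, nsmul_eq_mul,
    mul_one] at hcard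
  have hm : (Nat.totient m : ℂ) ≠ 0 :=
    Nat.cast_ne_zero.2 (Nat.totient_pos.2 (NeZero.pos m)).ne'
  rw [hfib f, hcard, mul_div_cancel_right₀ _ hm]

theorem sum_coprime_eq_sum_units {n : ℕ} [NeZero n] (f : ZMod n → ℂ) :
    ∑ k ∈ (Finset.Icc 1 n).filter (fun k => Nat.gcd k n = 1), f k = ∑ u : (ZMod n)ˣ, f u := by
  refine Finset.sum_bij (fun k hk => ZMod.unitOfCoprime k (mem_filter.1 hk).2) ?_ ?_ ?_ ?_
  · intro k _
    exact mem_univ _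
  · intro k hk l hl h
    have hkl := congrArg (fun u : (ZMod n)ˣ => (u : ZMod n)) h
    simp only [ZMod.coe_unitOfCoprime, ZMod.natCast_eq_natCast_iff] at hkl
    have hk' := mem_Icc.1 (mem_filter.1 hk).1
    have hl' := mem_Icc.1 (mem_filter.1 hl).1
    exact hkl.eq_of_abs_lt (by rw [abs_lt]; omega)
  · intro u _
    -- The representative of `u` in `{1, …, n}`; shifting by one avoids the representative `0`
    -- that `ZMod.val` gives for `n = 1`.
    have hu : ((((u : ZMod n) - 1).val + 1 : ℕ) : ZMod n) = u := by simp
    have hlt := ZMod.val_lt ((u : ZMod n) - 1)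
    have hc : Nat.gcd (((u : ZMod n) - 1).val + 1) n = 1 := by
      rw [← Nat.coprime_iff_gcd_eq_one, ← ZMod.isUnit_iff_coprime, hu]
      exact u.isUnit
    exact ⟨_, mem_filter.2 ⟨mem_Icc.2 ⟨by omega, by omega⟩, hc⟩, Units.ext (by simp)⟩
  · intro k _
    simp

theorem ramanujanSum_eq_holder (r n : ℕ) (hr : 0 < r) (hn : 0 < n) :
    ramanujanSum r n =
      ((Nat.totient n : ℂ) / (Nat.totient (n / Nat.gcd n r) : ℂ)) *
        (ArithmeticFunction.moebius (n / Nat.gcd n r) : ℂ) := by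
  have hg : 0 < Nat.gcd n r := Nat.gcd_pos_of_pos_left _ hn
  obtain ⟨m, hm⟩ : ∃ m, m = n / Nat.gcd n r := ⟨_, rfl⟩
  obtain ⟨s, hs⟩ : ∃ s, s = r / Nat.gcd n r := ⟨_, rfl⟩
  have hnm : n = m * Nat.gcd n r := by rw [hm, Nat.div_mul_cancel (Nat.gcd_dvd_left n r)]
  have hrs : r = s * Nat.gcd n r := by rw [hs, Nat.div_mul_cancel (Nat.gcd_dvd_right n r)]
  have hmn : m ∣ n := ⟨_, hnm⟩
  have hm0 : 0 < m := Nat.pos_of_dvd_of_pos hmn hn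
  have hcop : s.Coprime m := by
    rw [hm, hs]
    exact (Nat.coprime_div_gcd_div_gcd hg).symm
  have : NeZero m := ⟨hm0.ne'⟩
  have : NeZero n := ⟨hn.ne'⟩
  rw [← hm]
  have hζ := Complex.isPrimitiveRoot_exp_of_coprime s m hm0.ne' hcop
  have hfrac : (s : ℂ) / m = r / n := by
    have hgC : (Nat.gcd n r : ℂ) ≠ 0 := Nat.cast_ne_zero.2 hg.ne'
    have h1 : (n : ℂ) = m * (Nat.gcd n r : ℂ) := by exact_mod_cast hnm
    have h2 : (r : ℂ) = s * (Nat.gcd n r : ℂ) := by exact_mod_cast hrs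
    rw [h1, h2, mul_div_mul_right _ _ hgC]
  rw [hfrac] at hζ
  have hterm : ∀ k : ℕ, Complex.exp (2 * Real.pi * Complex.I * k * r / n)
      = Complex.exp (2 * Real.pi * Complex.I * (r / n))
        ^ (ZMod.castHom hmn (ZMod m) (k : ZMod n)).val := by
    intro k
    rw [map_natCast, ZMod.val_natCast, ← pow_mod_orderOf, ← hζ.eq_orderOf, Nat.mod_mod,
      hζ.eq_orderOf, pow_mod_orderOf, ← Complex.exp_nat_mul]
    congr 1
    ring
  unfold ramanujanSum
  simp only [hterm]
  rw [sum_coprime_eq_sum_units fun x => Complex.exp (2 * Real.pi * Complex.I * (r / n))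
        ^ (ZMod.castHom hmn (ZMod m) x).val,
    ← sum_primitiveRoots_complex m hm0, ← sum_units_pow_eq_sum_primitiveRoots hζ,
    ← sum_units_comp_unitsMap hmn]
  rfl
end

section
/- Let n ≥ 2 and let X be the unitary Cayley graph on ZMod n, i.e., the simple graph on ZMod n in which x and y are adjacent if and only if x − y is a unit of ZMod n. Then the characteristic polynomial of the adjacency matrix of X equals ∏_{d ∣ n} (X − μ(d)·φ(n)/φ(d))^{φ(d)}, the product being over the positive divisors d of n, where φ is Euler's totient function and μ is the Möbius function (so in particular the eigenvalue φ(n) occurs once, the eigenvalue 0 occurs ∑_{d ∣ n, d not squarefree} φ(d) times, and for each squarefree divisor d > 1 the eigenvalue μ(d)·φ(n)/φ(d) occurs φ(d) times). -/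
open Finset Polynomial

/-!
The characters `x ↦ ψ (x * k)`, `k ∈ ZMod n`, with `ψ` the standard additive character, diagonalise
every matrix of the form `(x, y) ↦ f (x - y)`, so over `ℂ` the eigenvalues of the adjacency matrix
are the Ramanujan sums `c k = ∑ u, ψ (u * k)` over the units `u`. If `k` has additive order `d`,
then `c k = μ d * φ n / φ d` (`sum_units_stdAddChar`): elements of the same additive order differ by
a unit (`exists_unit_mul_of_addOrderOf_eq`), so `c` is constant on the `φ d` elements of order `d`,
and summing `c` over them gives `φ n` times the sum of `ψ` over the elements of order `d`. The
latter is `μ d` by Möbius inversion (`sum_addOrderOf_eq`), because `ψ` sums to zero over the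
`m`-torsion for each divisor `m > 1` of `n` (`sum_torsion`). Grouping the indices `k` by additive
order gives the multiplicities `φ d`.
-/

/-- Every residue is a unit times the divisor `gcd n k = n / addOrderOf k` of `n`. -/
lemma exists_unit_mul_div_addOrderOf {n : ℕ} [NeZero n] (k : ZMod n) :
    ∃ u : (ZMod n)ˣ, k = u * ((n / addOrderOf k : ℕ) : ZMod n) := by
  have hn : 0 < n := NeZero.pos n
  obtain ⟨a, rfl⟩ : ∃ a : ℕ, (a : ZMod n) = k := ⟨k.val, by simp⟩
  rw [ZMod.addOrderOf_coe a hn.ne']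
  have hg : n.gcd a ∣ n := Nat.gcd_dvd_left _ _
  have hgpos : 0 < n.gcd a := Nat.gcd_pos_of_pos_left _ hn
  rw [Nat.div_div_self hg hn.ne']
  have hd : n / n.gcd a ∣ n := Nat.div_dvd_of_dvd hg
  have hcop : (a / n.gcd a).Coprime (n / n.gcd a) := (Nat.coprime_div_gcd_div_gcd hgpos).symm
  -- `a / gcd n a` is a unit modulo `n / gcd n a`, and units lift along `ZMod n → ZMod d`.
  obtain ⟨u, hu⟩ := ZMod.unitsMap_surjective hd (ZMod.unitOfCoprime _ hcop)
  refine ⟨u, ?_⟩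
  have h1 := congrArg Units.val hu
  rw [ZMod.unitsMap_val, ZMod.coe_unitOfCoprime, ZMod.cast_eq_val, ZMod.natCast_eq_natCast_iff]
    at h1
  have h2 := h1.mul_right' (n.gcd a)
  rw [Nat.div_mul_cancel hg, Nat.div_mul_cancel (Nat.gcd_dvd_right _ _)] at h2
  have h3 := (ZMod.natCast_eq_natCast_iff _ _ _).2 h2
  simpa using h3.symm

lemma exists_unit_mul_of_addOrderOf_eq {n : ℕ} [NeZero n] {a b : ZMod n}
    (h : addOrderOf a = addOrderOf b) : ∃ u : (ZMod n)ˣ, b = u * a := by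
  obtain ⟨u, hu⟩ := exists_unit_mul_div_addOrderOf a
  obtain ⟨v, hv⟩ := exists_unit_mul_div_addOrderOf b
  refine ⟨v * u⁻¹, ?_⟩
  rw [h] at hu
  generalize ((n / addOrderOf b : ℕ) : ZMod n) = g at *
  rw [hv, hu, Units.val_mul, mul_assoc, Units.inv_mul_cancel_left]

lemma addOrderOf_unit_mul {n : ℕ} (u : (ZMod n)ˣ) (a : ZMod n) :
    addOrderOf ((u : ZMod n) * a) = addOrderOf a := 
  addOrderOf_injective (AddMonoidHom.mulLeft (u : ZMod n)) (fun x y h => by simpa using h) a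

lemma addOrderOf_dvd {n : ℕ} [NeZero n] (k : ZMod n) : addOrderOf k ∣ n := by
  simpa using addOrderOf_dvd_card (x := k)

lemma card_addOrderOf_eq {n d : ℕ} [NeZero n] (hd : d ∣ n) :
    #{k : ZMod n | addOrderOf k = d} = d.totient :=
  IsAddCyclic.card_addOrderOf_eq_totient (by simpa using hd)

lemma sum_torsion {n m : ℕ} [NeZero n] (hm : m ∣ n) :
    ∑ x : ZMod n with addOrderOf x ∣ m, ZMod.stdAddChar x = if m = 1 then 1 else 0 := by
  split_ifs with h1
  · have : ({x : ZMod n | addOrderOf x ∣ m} : Finset _) = {0} := by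
      ext x; simp [h1]
    simp [this]
  · have hn : 0 < n := NeZero.pos n
    have hm0 : 0 < m := Nat.pos_of_dvd_of_pos hm hn
    have hb : ((n / m : ℕ) : ZMod n) ≠ 0 := by
      rw [Ne, ZMod.natCast_eq_zero_iff]
      exact Nat.not_dvd_of_pos_of_lt (Nat.div_pos (Nat.le_of_dvd hn hm) hm0)
        (Nat.div_lt_self hn (by omega))
    have hmb : m • ((n / m : ℕ) : ZMod n) = 0 := by
      rw [nsmul_eq_mul, ← Nat.cast_mul, Nat.mul_div_cancel' hm]; simp
    generalize ((n / m : ℕ) : ZMod n) = b at *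
    have hψ : (ZMod.stdAddChar b : ℂ) ≠ 1 := fun h =>
      hb (ZMod.injective_stdAddChar (by simpa using h))
    -- Translation by `b` permutes the `m`-torsion and scales the sum by `ψ b ≠ 1`.
    have hs : ∑ x : ZMod n with addOrderOf x ∣ m, (ZMod.stdAddChar (b + x) : ℂ) =
        ∑ x : ZMod n with addOrderOf x ∣ m, ZMod.stdAddChar x := by
      refine Finset.sum_equiv (Equiv.addLeft b) (fun x => ?_) (fun x _ => rfl)
      simp [addOrderOf_dvd_iff_nsmul_eq_zero, hmb, -nsmul_eq_mul]
    simp_rw [AddChar.map_add_eq_mul] at hs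
    rw [← Finset.mul_sum] at hs
    exact eq_zero_of_mul_eq_self_left hψ hs

lemma sum_addOrderOf_eq {n d : ℕ} [NeZero n] (hd : d ∣ n) :
    ∑ x : ZMod n with addOrderOf x = d, (ZMod.stdAddChar x : ℂ) = ArithmeticFunction.moebius d := by
  have hd0 : 0 < d := Nat.pos_of_dvd_of_pos hd (NeZero.pos n)
  have key := (ArithmeticFunction.sum_eq_iff_sum_smul_moebius_eq_on (R := ℂ)
    (f := fun d => ∑ x : ZMod n with addOrderOf x = d, (ZMod.stdAddChar x : ℂ))
    (g := fun m => if m = 1 then 1 else 0) {m | m ∣ n}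
    (fun a b hab hb => hab.trans hb)).1 (fun m hm0 hm => by
      rw [← sum_torsion hm, ← Finset.sum_fiberwise_of_maps_to (t := m.divisors)
        (g := fun x : ZMod n => addOrderOf x)]
      · refine Finset.sum_congr rfl fun i hi => ?_
        rw [Finset.filter_filter]
        refine Finset.sum_congr ?_ fun _ _ => rfl
        ext x
        simp only [Finset.mem_filter, Finset.mem_univ, true_and]
        exact ⟨fun h => ⟨h ▸ Nat.dvd_of_mem_divisors hi, h⟩, fun h => h.2⟩
      · intro x hx
        simpa [hm0.ne'] using hx) d hd0 hd
  rw [← key, Nat.sum_divisorsAntidiagonal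
      (fun a b => ArithmeticFunction.moebius a • if b = 1 then (1:ℂ) else 0),
    Finset.sum_eq_single d]
  · simp [Nat.div_self hd0]
  · intro b hb hbd
    rw [if_neg, smul_zero]
    intro h
    exact hbd (by simpa [h] using (Nat.mul_div_cancel' (Nat.dvd_of_mem_divisors hb)))
  · simp [hd0.ne']

/-- The value of Ramanujan's sum. Multiplied by `φ d`, where `d` is the order of `k`, the left side
becomes a double sum over units and elements of order `d`, which is evaluated in the other order. -/
lemma sum_units_stdAddChar {n : ℕ} [NeZero n] (k : ZMod n) :
    ∑ u : (ZMod n)ˣ, (ZMod.stdAddChar ((u : ZMod n) * k) : ℂ) =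
      ArithmeticFunction.moebius (addOrderOf k) * n.totient / (addOrderOf k).totient := by
  have hd := addOrderOf_dvd k
  have hφ : ((addOrderOf k).totient : ℂ) ≠ 0 := by
    simpa using (addOrderOf_pos k).ne'
  rw [eq_div_iff hφ]
  have hconst : ∀ x ∈ ({x : ZMod n | addOrderOf x = addOrderOf k} : Finset _),
      ∑ u : (ZMod n)ˣ, (ZMod.stdAddChar ((u : ZMod n) * x) : ℂ) =
        ∑ u : (ZMod n)ˣ, (ZMod.stdAddChar ((u : ZMod n) * k) : ℂ) := by
    intro x hx
    obtain ⟨v, rfl⟩ := exists_unit_mul_of_addOrderOf_eq (Finset.mem_filter.1 hx).2.symm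
    exact Fintype.sum_equiv (Equiv.mulRight v) _ _ fun u => by simp [mul_assoc]
  have hinner : ∀ u : (ZMod n)ˣ, ∑ x : ZMod n with addOrderOf x = addOrderOf k,
      (ZMod.stdAddChar ((u : ZMod n) * x) : ℂ) = ArithmeticFunction.moebius (addOrderOf k) := by
    intro u
    rw [← sum_addOrderOf_eq hd]
    refine Finset.sum_equiv (Units.mulLeft u) (fun x => ?_) (fun x _ => rfl)
    simp [addOrderOf_unit_mul]
  have h := Finset.sum_congr rfl hconst
  rw [Finset.sum_const, card_addOrderOf_eq hd, Finset.sum_comm,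
    Finset.sum_congr rfl fun u _ => hinner u] at h
  simp only [Finset.sum_const, Finset.card_univ, ZMod.card_units_eq_totient, nsmul_eq_mul] at h
  rw [mul_comm, ← h, mul_comm]

lemma charpoly_eq_of_mul_eq {ι : Type*} [Fintype ι] [DecidableEq ι] {A F G : Matrix ι ι ℂ}
    {D : ι → ℂ} (hFG : F * G = 1) (h : A * F = F * Matrix.diagonal D) :
    A.charpoly = ∏ i, (Polynomial.X - Polynomial.C (D i)) := by
  have : A = F * Matrix.diagonal D * G := by rw [← h, mul_assoc, hFG, mul_one]
  rw [this, Matrix.charpoly_mul_comm, ← mul_assoc, mul_eq_one_comm.1 hFG, one_mul,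
    Matrix.charpoly_diagonal]

theorem unitaryCayley_charpoly (n : ℕ) (hn : 2 ≤ n) [NeZero n]
    (X : SimpleGraph (ZMod n)) [DecidableRel X.Adj]
    (hX : ∀ x y : ZMod n, X.Adj x y ↔ IsUnit (x - y)) :
    (X.adjMatrix ℝ).charpoly =
      ∏ d ∈ n.divisors,
        (Polynomial.X - Polynomial.C
          ((ArithmeticFunction.moebius d : ℝ) * (Nat.totient n : ℝ) / (Nat.totient d : ℝ)))
          ^ (Nat.totient d) := by
  apply Polynomial.map_injective Complex.ofRealHom Complex.ofReal_injective
  rw [← Matrix.charpoly_map]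
  have hn0 : (n : ℂ) ≠ 0 := NeZero.ne _
  rw [charpoly_eq_of_mul_eq
    (F := Matrix.of fun x k : ZMod n => ZMod.stdAddChar (x * k))
    (G := Matrix.of fun k y : ZMod n => (n : ℂ)⁻¹ * ZMod.stdAddChar (-(k * y)))
    (D := fun k => (ArithmeticFunction.moebius (addOrderOf k) : ℂ) * n.totient /
      (addOrderOf k).totient)]
  · rw [← Finset.prod_fiberwise_of_maps_to (s := Finset.univ) (t := n.divisors)
      (g := fun k : ZMod n => addOrderOf k)
      (fun k _ => Nat.mem_divisors.2 ⟨addOrderOf_dvd k, NeZero.ne n⟩), Polynomial.map_prod]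
    refine Finset.prod_congr rfl fun d hd => ?_
    rw [Finset.prod_congr rfl (g := fun _ => Polynomial.X - Polynomial.C
      ((ArithmeticFunction.moebius d : ℂ) * n.totient / d.totient))
      (fun k hk => by rw [(Finset.mem_filter.1 hk).2]),
      Finset.prod_const, card_addOrderOf_eq (Nat.dvd_of_mem_divisors hd)]
    simp
  · ext x y
    have h := AddChar.sum_mulShift (x - y) (ZMod.isPrimitive_stdAddChar n)
    simp only [Matrix.mul_apply, Matrix.of_apply, Matrix.one_apply]
    calc _ = (n : ℂ)⁻¹ * ∑ k : ZMod n, ZMod.stdAddChar (k * (x - y)) := by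
          rw [Finset.mul_sum]
          refine Finset.sum_congr rfl fun k _ => ?_
          rw [mul_left_comm, ← AddChar.map_add_eq_mul]
          congr 2; ring
      _ = _ := by
          rw [h]
          by_cases hxy : x = y <;> simp [hxy, sub_eq_zero, hn0]
  · ext x k
    rw [Matrix.mul_diagonal, ← sum_units_stdAddChar]
    simp only [Matrix.mul_apply, Matrix.of_apply, Matrix.map_apply, SimpleGraph.adjMatrix_apply]
    rw [Finset.mul_sum]
    calc _ = ∑ y : ZMod n with X.Adj x y, (ZMod.stdAddChar (y * k) : ℂ) := by
          rw [Finset.sum_filter]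
          refine Finset.sum_congr rfl fun y _ => ?_
          split_ifs <;> simp
      _ = _ := by
          -- The neighbours of `x` are the elements `x + u` with `u` a unit.
          symm
          refine Finset.sum_bij (fun u _ => x + (u : ZMod n)) ?_ ?_ ?_ ?_
          · intro u _
            simp [hX]
          · intro u _ v _ h
            exact Units.ext (add_left_cancel h)
          · intro y hy
            have hu : IsUnit (y - x) := by
              rw [← neg_sub]
              exact ((hX x y).1 (Finset.mem_filter.1 hy).2).neg
            exact ⟨hu.unit, Finset.mem_univ _, by simp⟩
          · intro u _
            rw [← AddChar.map_add_eq_mul, add_mul]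
end

section
/- Let n ≥ 2 and let X be the unitary Cayley graph on ZMod n. Then the kernel of the adjacency matrix of X over ℂ has dimension at least ∑_{d ∣ n, d not squarefree} φ(d), the sum being over the positive divisors d of n that are divisible by the square of some prime, where φ is Euler's totient function. -/
open Finset

/-!
Let `r` be the radical of `n`. An element of `ZMod n` is a unit iff its reduction mod `r` is, because
`n` and `r` have the same prime divisors. So the adjacency matrix depends on its row and column
indices only through their residues mod `r`, hence factors through `ℂ ^ (ZMod r)` and has rank at
most `r` (`rank_adjMatrix_le`); its kernel has dimension at least `n - r`.

On the other side, the squarefree divisors of `n` are exactly the divisors of `r`, so by Gauss'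
identity `∑ d ∣ m, φ d = m`, applied to `n` and to `r`, the sum of `φ` over the divisors of `n` that
are not squarefree is `n - r` (`sum_totient_not_squarefree_add_radical`).
-/

open UniqueFactorizationMonoid (radical)

lemma sum_totient_not_squarefree_add_radical (n : ℕ) (hn : n ≠ 0) :
    (∑ d ∈ n.divisors.filter (fun d => ¬ Squarefree d), Nat.totient d) + radical n = n := by
  have hsq : n.divisors.filter Squarefree = (radical n).divisors := by
    ext d
    simp only [mem_filter, Nat.mem_divisors]
    constructor
    · rintro ⟨⟨hd, -⟩, hs⟩
      exact ⟨(UniqueFactorizationMonoid.dvd_radical_iff hs.isRadical hn).2 hd,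
        UniqueFactorizationMonoid.radical_ne_zero⟩
    · rintro ⟨hd, -⟩
      exact ⟨⟨hd.trans UniqueFactorizationMonoid.radical_dvd_self, hn⟩,
        UniqueFactorizationMonoid.squarefree_radical.squarefree_of_dvd hd⟩
  have h := sum_filter_add_sum_filter_not n.divisors Squarefree Nat.totient
  rw [hsq, Nat.sum_totient, Nat.sum_totient] at h
  omega

lemma isUnit_iff_isUnit_castHom_radical (n : ℕ) [NeZero n] (x : ZMod n) :
    IsUnit x ↔ IsUnit (ZMod.castHom (UniqueFactorizationMonoid.radical_dvd_self (a := n))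
      (ZMod (radical n)) x) := by
  obtain ⟨k, rfl⟩ := ZMod.natCast_zmod_surjective x
  rw [map_natCast, ZMod.isUnit_iff_coprime, ZMod.isUnit_iff_coprime]
  constructor
  · exact fun h => h.coprime_dvd_right UniqueFactorizationMonoid.radical_dvd_self
  · intro h
    exact (h.pow_right n).coprime_dvd_right (Nat.dvd_radical_pow_self (NeZero.ne n))

lemma rank_adjMatrix_le (n : ℕ) [NeZero n]
    (X : SimpleGraph (ZMod n)) [DecidableRel X.Adj]
    (hX : ∀ x y : ZMod n, X.Adj x y ↔ IsUnit (x - y)) :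
    (X.adjMatrix ℂ).rank ≤ radical n := by
  classical
  haveI : NeZero (radical n) := ⟨UniqueFactorizationMonoid.radical_ne_zero⟩
  let c := ZMod.castHom (UniqueFactorizationMonoid.radical_dvd_self (a := n)) (ZMod (radical n))
  let M : Matrix (ZMod n) (ZMod (radical n)) ℂ :=
    Matrix.of fun x j => if IsUnit (c x - j) then 1 else 0
  let N : Matrix (ZMod (radical n)) (ZMod n) ℂ :=
    Matrix.of fun j y => if j = c y then 1 else 0
  have hMN : X.adjMatrix ℂ = M * N := by
    ext x y
    have hxy : X.Adj x y ↔ IsUnit (c x - c y) := by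
      rw [hX, isUnit_iff_isUnit_castHom_radical, map_sub]
    simp [M, N, Matrix.mul_apply, SimpleGraph.adjMatrix_apply, hxy]
  calc (X.adjMatrix ℂ).rank ≤ M.rank := hMN ▸ Matrix.rank_mul_le_left M N
    _ ≤ Fintype.card (ZMod (radical n)) := M.rank_le_card_width
    _ = radical n := ZMod.card _

theorem unitaryCayley_kernel_dim (n : ℕ) (hn : 2 ≤ n) [NeZero n]
    (X : SimpleGraph (ZMod n)) [DecidableRel X.Adj]
    (hX : ∀ x y : ZMod n, X.Adj x y ↔ IsUnit (x - y)) :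
    (∑ d ∈ n.divisors.filter (fun d => ¬ Squarefree d), Nat.totient d) ≤
      Module.finrank ℂ ↥(LinearMap.ker (Matrix.toLin' (X.adjMatrix ℂ))) := by
  have hsum := sum_totient_not_squarefree_add_radical n (NeZero.ne n)
  have hrank := rank_adjMatrix_le n X hX
  have hker := (Matrix.toLin' (X.adjMatrix ℂ)).finrank_range_add_finrank_ker
  rw [Module.finrank_fintype_fun_eq_card, ZMod.card] at hker
  have hrange : (X.adjMatrix ℂ).rank =
      Module.finrank ℂ (LinearMap.range (Matrix.toLin' (X.adjMatrix ℂ))) := rfl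
  omega
end

section
/- Let n ≥ 2, let X be the unitary Cayley graph on ZMod n, and let d be a squarefree divisor of n. Then there exists a real symmetric n × n matrix A, indexed by ZMod n, with A_{uv} ≠ 0 ⟺ u ∼ v in X for all u ≠ v, such that dim ker A ≥ φ(d); that is, the maximum nullity satisfies M(X) ≥ φ(d). -/
/-!
The matrix is `A = B - λ I`, where `B` is the adjacency matrix of the graph. Every additive character
`χ` of `ZMod n` is an eigenvector of `B`, with eigenvalue the sum of `χ` over the units. The
characters `x ↦ e(u x / d)`, for `u` a unit mod `d`, all have the *same* eigenvalue `λ`: since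
units mod `d` lift to units mod `n`, replacing `1` by `u` merely permutes the units being summed
over. There are `φ(d)` of these characters, they are linearly independent over `ℂ`, and `λ` is
real because the set of units is closed under negation.

To get real kernel vectors, `χ` is replaced by `Re χ + Im χ`. As the family of characters is closed
under complex conjugation, these real functions are again linearly independent
(`linearIndependent_re_add_im`).
-/

open scoped ComplexConjugate

/-- If a `ℂ`-linearly independent family of functions is permuted by complex conjugation, then the
functions `Re χ + Im χ` (as for the Hartley transform) are `ℝ`-linearly independent. -/
lemma linearIndependent_re_add_im {ι V : Type*} [Fintype ι] (χ : ι → V → ℂ)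
    (hχ : LinearIndependent ℂ χ) (σ : Equiv.Perm ι) (hσ : ∀ i x, χ (σ i) x = conj (χ i x)) :
    LinearIndependent ℝ (fun i x => (χ i x).re + (χ i x).im) := by
  rw [Fintype.linearIndependent_iff] at hχ ⊢
  intro c hc
  -- `Re z + Im z = a z + ā z̄` for `a = (1 - I) / 2`; the coefficient of `χ i` is collected.
  have key := hχ (fun i => (c i : ℂ) * (1 - Complex.I) / 2
      + (c (σ.symm i) : ℂ) * (1 + Complex.I) / 2) (by
    funext x
    have hx := congrFun hc x
    simp only [Finset.sum_apply, Pi.smul_apply, smul_eq_mul, Pi.zero_apply] at hx ⊢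
    simp only [add_mul, Finset.sum_add_distrib]
    have h2 : ∑ i, (c (σ.symm i) : ℂ) * (1 + Complex.I) / 2 * χ i x
        = ∑ i, (c i : ℂ) * (1 + Complex.I) / 2 * conj (χ i x) := by
      rw [← Equiv.sum_comp σ]
      simp [hσ]
    have h3 : ((∑ i, c i * ((χ i x).re + (χ i x).im) : ℝ) : ℂ) = 0 := by rw [hx]; simp
    rw [h2, ← Finset.sum_add_distrib, ← h3, Complex.ofReal_sum]
    refine Finset.sum_congr rfl fun i _ => ?_
    apply Complex.ext <;> simp <;> ring)
  intro i
  have hi := key i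
  have hre := congrArg Complex.re hi
  have him := congrArg Complex.im hi
  simp at hre him
  linarith

/-- The character `x ↦ e(u x / d)` of `ZMod n`, for `d ∣ n` and `u` a unit mod `d`. -/
noncomputable def levelChar {n d : ℕ} [NeZero d] (hdn : d ∣ n) (u : (ZMod d)ˣ) :
    AddChar (ZMod n) ℂ :=
  ((ZMod.stdAddChar (N := d)).mulShift (u : ZMod d)).compAddMonoidHom
    (ZMod.castHom hdn (ZMod d)).toAddMonoidHom

lemma levelChar_apply {n d : ℕ} [NeZero d] (hdn : d ∣ n) (u : (ZMod d)ˣ) (x : ZMod n) :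
    levelChar hdn u x = ZMod.stdAddChar ((u : ZMod d) * ZMod.castHom hdn (ZMod d) x) := rfl

lemma levelChar_injective {n d : ℕ} [NeZero d] (hdn : d ∣ n) :
    Function.Injective (levelChar hdn) := by
  intro u v h
  have h1 := DFunLike.congr_fun h 1
  rw [levelChar_apply, levelChar_apply] at h1
  have h2 := ZMod.injective_stdAddChar h1
  rw [map_one, mul_one, mul_one] at h2
  exact Units.ext h2

lemma levelChar_neg {n d : ℕ} [NeZero d] (hdn : d ∣ n) (u : (ZMod d)ˣ) (x : ZMod n) :
    levelChar hdn (-u) x = levelChar hdn u (-x) := by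
  rw [levelChar_apply, levelChar_apply, map_neg, Units.val_neg, neg_mul, mul_neg]

/-- The eigenvalue (a Ramanujan sum) does not depend on the unit `u`. -/
lemma sum_levelChar {n d : ℕ} [NeZero n] [NeZero d] (hdn : d ∣ n) (u : (ZMod d)ˣ) :
    ∑ w : (ZMod n)ˣ, levelChar hdn u w = ∑ w : (ZMod n)ˣ, levelChar hdn 1 w := by
  obtain ⟨v, rfl⟩ := ZMod.unitsMap_surjective hdn u
  rw [← Equiv.sum_comp (Equiv.mulLeft v) (fun w : (ZMod n)ˣ => levelChar hdn 1 (w : ZMod n))]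
  refine Finset.sum_congr rfl fun w _ => ?_
  rw [levelChar_apply, levelChar_apply]
  simp [ZMod.unitsMap_def, ZMod.cast_mul hdn]

/-- Characters are eigenvectors of the adjacency operator. -/
lemma sum_adj_addChar {n : ℕ} [NeZero n] [DecidablePred fun x : ZMod n => IsUnit x]
    (χ : AddChar (ZMod n) ℂ) (x : ZMod n) :
    ∑ y, (if IsUnit (x - y) then χ y else 0) = (∑ w : (ZMod n)ˣ, χ w) * χ x := by
  have h1 : ∑ y, (if IsUnit (x - y) then χ y else 0)
      = ∑ z : ZMod n, (if IsUnit z then χ (x + z) else 0) := by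
    rw [← Equiv.sum_comp (Equiv.addLeft x)]
    refine Finset.sum_congr rfl fun z _ => ?_
    simp
  have h2 : ∑ z : ZMod n, (if IsUnit z then χ (x + z) else 0)
      = ∑ w : (ZMod n)ˣ, χ (x + w) := by
    rw [← Finset.sum_filter]
    symm
    refine Finset.sum_bij (fun w _ => (w : ZMod n)) ?_ ?_ ?_ ?_
    · intro w _; simp
    · intro a _ b _ h; exact Units.ext h
    · intro b hb
      obtain ⟨w, rfl⟩ := (Finset.mem_filter.mp hb).2
      exact ⟨w, Finset.mem_univ _, rfl⟩
    · intro w _; rfl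
  rw [h1, h2, Finset.sum_mul]
  refine Finset.sum_congr rfl fun w _ => ?_
  rw [AddChar.map_add_eq_mul, mul_comm]

theorem unitaryCayley_maxNullity_ge_totient (n : ℕ) (hn : 2 ≤ n) [NeZero n]
    (X : SimpleGraph (ZMod n))
    (hX : ∀ x y : ZMod n, X.Adj x y ↔ IsUnit (x - y))
    (d : ℕ) (hdn : d ∣ n) (hsq : Squarefree d) :
    ∃ A : Matrix (ZMod n) (ZMod n) ℝ, A.IsSymm ∧
      (∀ u v : ZMod n, u ≠ v → (A u v ≠ 0 ↔ X.Adj u v)) ∧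
      Nat.totient d ≤ Module.finrank ℝ ↥(LinearMap.ker (Matrix.toLin' A)) := by
  classical
  have : NeZero d := ⟨hsq.ne_zero⟩
  let χ : (ZMod d)ˣ → ZMod n → ℂ := fun u x => levelChar hdn u x
  let S : ℂ := ∑ w : (ZMod n)ˣ, levelChar hdn 1 w
  have hconj : ∀ u x, χ (-u) x = conj (χ u x) := fun u x => by
    simp only [χ]
    rw [levelChar_neg, AddChar.map_neg_eq_conj]
  have hS : (S.re : ℂ) = S := by
    rw [← Complex.conj_eq_iff_re]
    calc conj S = ∑ w : (ZMod n)ˣ, levelChar hdn (-1) w := by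
          rw [map_sum]
          exact Finset.sum_congr rfl fun w _ => (hconj 1 w).symm
      _ = S := sum_levelChar hdn (-1)
  let A : Matrix (ZMod n) (ZMod n) ℝ := fun x y =>
    (if IsUnit (x - y) then 1 else 0) - (if x = y then S.re else 0)
  have hker : ∀ u x, ∑ y, (A x y : ℂ) * χ u y = 0 := by
    intro u x
    have h := sum_adj_addChar (levelChar hdn u) x
    rw [sum_levelChar] at h
    have h1 : ∀ y, (A x y : ℂ) * χ u y = (if IsUnit (x - y) then levelChar hdn u y else 0)
        - (if x = y then S * χ u y else 0) := by
      intro y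
      simp only [A, χ]
      split_ifs <;> simp [hS, sub_mul]
    simp only [h1, Finset.sum_sub_distrib, h, Finset.sum_ite_eq, Finset.mem_univ, if_true]
    exact sub_self _
  have hχ : LinearIndependent ℂ χ :=
    (AddChar.linearIndependent (ZMod n) ℂ).comp (levelChar hdn) (levelChar_injective hdn)
  have hli := linearIndependent_re_add_im χ hχ (Equiv.neg _) hconj
  refine ⟨A, ?_, ?_, ?_⟩
  · ext x y
    change (if IsUnit (y - x) then (1 : ℝ) else 0) - (if y = x then S.re else 0)
      = (if IsUnit (x - y) then 1 else 0) - (if x = y then S.re else 0)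
    have h : IsUnit (y - x) ↔ IsUnit (x - y) := by rw [← neg_sub x y, IsUnit.neg_iff]
    simp only [h, eq_comm (a := y) (b := x)]
  · intro u v huv
    simp [A, huv, hX]
  · have hmem : ∀ u, (fun x => (χ u x).re + (χ u x).im) ∈ LinearMap.ker (Matrix.toLin' A) := by
      intro u
      rw [LinearMap.mem_ker]
      funext x
      have hre := congrArg Complex.re (hker u x)
      have him := congrArg Complex.im (hker u x)
      simp only [Complex.re_sum, Complex.im_sum, Complex.re_ofReal_mul, Complex.im_ofReal_mul,
        Complex.zero_re, Complex.zero_im] at hre him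
      simp only [Matrix.toLin'_apply, Matrix.mulVec, dotProduct, mul_add, Finset.sum_add_distrib,
        hre, him, add_zero, Pi.zero_apply]
    have hli' : LinearIndependent ℝ (fun u => (⟨_, hmem u⟩ : LinearMap.ker (Matrix.toLin' A))) :=
      LinearIndependent.of_comp (LinearMap.ker (Matrix.toLin' A)).subtype hli
    rw [← ZMod.card_units_eq_totient]
    exact hli'.fintype_card_le_finrank
end

section
/- Let n ≥ 2, let ι be a finite index type, and for each i ∈ ι let G_i be a finite group and S_i ⊆ G_i a subset closed under inverses. Let G = ZMod n × ∏_{i ∈ ι} G_i, let S = {(x, g) : x is a unit of ZMod n and g_i ∈ S_i for all i ∈ ι}, and let X be the Cayley graph of G with connection set S. Fix real constants ℓ_i ∈ ℝ for i ∈ ι and let N_i denote the number of group homomorphisms ρ : G_i → ℂ* satisfying ρ(s) = ℓ_i for all s ∈ S_i. Then for every divisor d of n, there exists a real symmetric matrix A indexed by G with A_{uv} ≠ 0 ⟺ u ∼ v in X for all u ≠ v, such that dim ker A ≥ (∏_{i ∈ ι} N_i)·φ(d); that is, the maximum nullity satisfies M(X) ≥ (∏_{i ∈ ι} N_i)·φ(d).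 -/
/-!
The matrix is the adjacency matrix of `X` shifted by an eigenvalue: `A = Adj X - μ • 1` for a
suitable real `μ`. For every choice of homomorphisms `ρ i : G i →* ℂˣ` with `ρ i = ℓ i` on `S i`
and of a unit `k` of `ZMod d`, the function
`(x, g) ↦ exp (2πi k x / d) * ∏ i, ρ i (g i)` is a multiplicative character of the group
`ZMod n × ∏ i, G i`, hence an eigenvector of the adjacency matrix. Its eigenvalue is the sum of the
inverse character over the connection set, namely a Ramanujan sum times
`#(∏ i, S i) * ∏ i, ℓ i`. The Ramanujan sum does not depend on `k`, because `k` lifts to a unit of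
`ZMod n` that can be absorbed by the change of variables `x ↦ k x` (`exists_ramanujan`), and it is
real by the change of variables `x ↦ -x`. So all these characters are eigenvectors for one and the
same real eigenvalue `μ`.

There are `(∏ i, N i) * φ d` such characters. They are pairwise distinct, hence linearly independent
over `ℂ` (Dedekind), and a complex-linearly independent family in the complexified kernel of a real
matrix is no larger than the real nullity (`card_le_finrank_ker`).
-/

open Finset

/-- Real and imaginary parts of a complex kernel vector lie in the real kernel, so the complex
kernel is spanned by the complexification of a basis of the real one. -/
lemma card_le_finrank_ker {V J : Type*} [Fintype V] [DecidableEq V] [Fintype J]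
    (A : Matrix V V ℝ) (f : J → V → ℂ) (hf : LinearIndependent ℂ f)
    (hA : ∀ j u, ∑ v, (A u v : ℂ) * f j v = 0) :
    Fintype.card J ≤ Module.finrank ℝ ↥(LinearMap.ker (Matrix.toLin' A)) := by
  set K := LinearMap.ker (Matrix.toLin' A) with hK
  let b := Module.finBasis ℝ K
  let c : Fin (Module.finrank ℝ K) → V → ℂ := fun i v => ((b i : V → ℝ) v : ℂ)
  have key : ∀ w : K, (fun v => (((w : V → ℝ) v : ℝ) : ℂ)) ∈ Submodule.span ℂ (Set.range c) := by
    intro w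
    have hw := b.sum_repr w
    have : (fun v => (((w : V → ℝ) v : ℝ) : ℂ)) = ∑ i, ((b.repr w i : ℝ) : ℂ) • c i := by
      ext v
      have hv : (w : V → ℝ) v = ∑ i, b.repr w i * (b i : V → ℝ) v := by
        have := congrFun (congrArg (Subtype.val : K → V → ℝ) hw) v
        simpa only [Submodule.coe_sum, Submodule.coe_smul, Finset.sum_apply, Pi.smul_apply,
          smul_eq_mul] using this.symm
      simp [c, hv, Finset.sum_apply]
    rw [this]
    exact Submodule.sum_mem _ fun i _ =>
      Submodule.smul_mem _ _ (Submodule.subset_span ⟨i, rfl⟩)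
  have hmem : ∀ j, f j ∈ Submodule.span ℂ (Set.range c) := by
    intro j
    have hre : (fun v => (f j v).re) ∈ K := by
      rw [hK, LinearMap.mem_ker]
      ext u
      have := congrArg Complex.re (hA j u)
      simpa [Matrix.toLin'_apply, Matrix.mulVec, dotProduct] using this
    have him : (fun v => (f j v).im) ∈ K := by
      rw [hK, LinearMap.mem_ker]
      ext u
      have := congrArg Complex.im (hA j u)
      simpa [Matrix.toLin'_apply, Matrix.mulVec, dotProduct] using this
    have h := Submodule.add_mem _ (key ⟨_, hre⟩)
      (Submodule.smul_mem _ Complex.I (key ⟨_, him⟩))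
    convert h using 1
    ext v
    simp [mul_comm Complex.I, Complex.re_add_im]
  let f' : J → Submodule.span ℂ (Set.range c) := fun j => ⟨f j, hmem j⟩
  have hf' : LinearIndependent ℂ f' :=
    LinearIndependent.of_comp (Submodule.subtype _) hf
  calc Fintype.card J ≤ Module.finrank ℂ (Submodule.span ℂ (Set.range c)) :=
        hf'.fintype_card_le_finrank
    _ ≤ Fintype.card (Fin (Module.finrank ℝ K)) := finrank_range_le_card c
    _ = _ := Fintype.card_fin _

/-- There are `φ d` frequencies `a k` in `ZMod n` (the elements of additive order `d`) whose additive
characters have one common, real sum over the units of `ZMod n`. -/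
lemma exists_ramanujan (n : ℕ) [NeZero n] (d : ℕ) (hdn : d ∣ n) :
    ∃ (a : (ZMod d)ˣ → ZMod n) (c : ℝ), Function.Injective a ∧
      ∀ k, ∑ x : (ZMod n)ˣ, ZMod.stdAddChar (-(a k * (x : ZMod n))) = (c : ℂ) := by
  obtain ⟨m, rfl⟩ := hdn
  have hm : m ≠ 0 := by
    rintro rfl
    exact NeZero.ne (d * 0) (by simp)
  choose t ht using ZMod.unitsMap_surjective (Dvd.intro m rfl : d ∣ d * m)
  have hconj : (starRingEnd ℂ) (∑ x : (ZMod (d * m))ˣ,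
      ZMod.stdAddChar (-((m : ZMod (d * m)) * (x : ZMod (d * m))))) =
      ∑ x : (ZMod (d * m))ˣ, ZMod.stdAddChar (-((m : ZMod (d * m)) * (x : ZMod (d * m)))) := by
    rw [map_sum]
    refine Fintype.sum_equiv (Equiv.neg _) _ _ fun x => ?_
    rw [← AddChar.map_neg_eq_conj]
    simp
  obtain ⟨c, hc⟩ := Complex.conj_eq_iff_real.mp hconj
  refine ⟨fun k => m * (t k : ZMod (d * m)), c, ?_, ?_⟩
  · intro k k' h
    rw [← ht k, ← ht k']
    ext
    simp only [ZMod.unitsMap_val]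
    obtain ⟨y, hy⟩ := ZMod.intCast_surjective (t k : ZMod (d * m))
    obtain ⟨y', hy'⟩ := ZMod.intCast_surjective (t k' : ZMod (d * m))
    simp only [← hy, ← hy'] at h ⊢
    rw [ZMod.cast_intCast (Dvd.intro m rfl), ZMod.cast_intCast (Dvd.intro m rfl),
      ZMod.intCast_eq_intCast_iff_dvd_sub]
    have h' : (((m : ℤ) * y : ℤ) : ZMod (d * m)) = (((m : ℤ) * y' : ℤ) : ZMod (d * m)) := by
      push_cast; exact h
    rw [ZMod.intCast_eq_intCast_iff_dvd_sub, ← mul_sub, Nat.cast_mul, mul_comm (d : ℤ)] at h'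
    exact (mul_dvd_mul_iff_left (by exact_mod_cast hm)).mp h'
  · intro k
    rw [← hc]
    refine Fintype.sum_equiv (Equiv.mulLeft (t k)) _ _ fun x => ?_
    simp [mul_assoc]

/-- The character `(x, g) ↦ exp (2πi a x / n) * ∏ i, ρ i (g i)` of `ZMod n × ∏ i, G i`, with the
first factor written multiplicatively. -/
noncomputable def prodChar (n : ℕ) [NeZero n] {ι : Type*} [Fintype ι] {G : ι → Type*}
    [∀ i, Group (G i)] (a : ZMod n) (ρ : ∀ i, G i →* ℂˣ) :
    (Multiplicative (ZMod n) × ∀ i, G i) →* ℂ where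
  toFun u := ZMod.stdAddChar (a * u.1.toAdd) * ∏ i, ((ρ i (u.2 i) : ℂˣ) : ℂ)
  map_one' := by simp
  map_mul' u v := by
    simp only [Prod.fst_mul, Prod.snd_mul, toAdd_mul, mul_add, AddChar.map_add_eq_mul,
      Pi.mul_apply, map_mul, Units.val_mul, Finset.prod_mul_distrib]
    ring

lemma prodChar_apply (n : ℕ) [NeZero n] {ι : Type*} [Fintype ι] {G : ι → Type*}
    [∀ i, Group (G i)] (a : ZMod n) (ρ : ∀ i, G i →* ℂˣ)
    (u : Multiplicative (ZMod n) × ∀ i, G i) :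
    prodChar n a ρ u = ZMod.stdAddChar (a * u.1.toAdd) * ∏ i, ((ρ i (u.2 i) : ℂˣ) : ℂ) := rfl

lemma prodChar_injective (n : ℕ) [NeZero n] {ι : Type*} [Fintype ι] [DecidableEq ι]
    {G : ι → Type*} [∀ i, Group (G i)] {a a' : ZMod n} {ρ ρ' : ∀ i, G i →* ℂˣ}
    (h : prodChar n a ρ = prodChar n a' ρ') : a = a' ∧ ρ = ρ' := by
  constructor
  · have := DFunLike.congr_fun h (Multiplicative.ofAdd 1, 1)
    simp only [prodChar_apply, toAdd_ofAdd, mul_one, Pi.one_apply, map_one, Units.val_one,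
      Finset.prod_const_one] at this
    exact ZMod.injective_stdAddChar this
  · funext i
    ext g
    have hp : ∀ σ : ∀ i, G i →* ℂˣ,
        ∏ j, ((σ j (Pi.mulSingle i g j) : ℂˣ) : ℂ) = σ i g := by
      intro σ
      rw [Finset.prod_eq_single i]
      · simp
      · intro j _ hj
        simp [Pi.mulSingle_eq_of_ne hj]
      · simp
    have := DFunLike.congr_fun h (1, Pi.mulSingle i g)
    simpa [prodChar_apply, hp] using this

lemma finite_monoidHom_units (H : Type*) [Group H] [Finite H] : Finite (H →* ℂˣ) := by
  have hli := (linearIndependent_monoidHom H ℂ).comp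
    (fun ρ : H →* ℂˣ => (Units.coeHom ℂ).comp ρ) (by
      intro ρ ρ' h
      ext g
      exact DFunLike.congr_fun h g)
  exact hli.finite

/-- A character is an eigenvector of the Cayley adjacency matrix: the eigenvalue is the sum of its
inverse over the connection set `{s | P s}`. -/
lemma sum_char_div {H : Type*} [Group H] [Fintype H] (χ : H →* ℂ) (P : H → Prop)
    [DecidablePred P] (u : H) :
    ∑ v, (if P (u / v) then χ v else 0) = (∑ s, if P s then χ s⁻¹ else 0) * χ u := by
  rw [Finset.sum_mul]
  refine Fintype.sum_equiv (Equiv.divLeft u) _ _ fun v => ?_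
  simp only [Equiv.divLeft_apply, ite_mul, zero_mul, ← map_mul]
  simp

theorem cayley_prod_maxNullity (n : ℕ) (hn : 2 ≤ n) [NeZero n]
    {ι : Type*} [Fintype ι] [DecidableEq ι]
    (G : ι → Type*) [∀ i, Group (G i)] [∀ i, Fintype (G i)] [∀ i, DecidableEq (G i)]
    (S : ∀ i, Finset (G i)) (hSinv : ∀ i, ∀ s ∈ S i, s⁻¹ ∈ S i)
    (X : SimpleGraph (ZMod n × ∀ i, G i))
    (hX : ∀ u v : ZMod n × ∀ i, G i,
      X.Adj u v ↔ (IsUnit (u.1 - v.1) ∧ ∀ i, u.2 i * (v.2 i)⁻¹ ∈ S i))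
    (ℓ : ι → ℝ)
    (N : ι → ℕ)
    (hN : ∀ i, N i = Nat.card {ρ : G i →* ℂˣ // ∀ s ∈ S i, ((ρ s : ℂˣ) : ℂ) = (ℓ i : ℂ)})
    (d : ℕ) (hdn : d ∣ n) :
    ∃ A : Matrix (ZMod n × ∀ i, G i) (ZMod n × ∀ i, G i) ℝ, A.IsSymm ∧
      (∀ u v : ZMod n × ∀ i, G i, u ≠ v → (A u v ≠ 0 ↔ X.Adj u v)) ∧
      (∏ i, N i) * Nat.totient d ≤
        Module.finrank ℝ ↥(LinearMap.ker (Matrix.toLin' A)) := by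
  classical
  obtain ⟨a, c, ha, hc⟩ := exists_ramanujan n d hdn
  have : NeZero d := ⟨fun h => NeZero.ne n (by simpa [h] using hdn)⟩
  have hfin : ∀ i, Finite (G i →* ℂˣ) := fun i => finite_monoidHom_units (G i)
  let R : ι → Type _ := fun i =>
    {ρ : G i →* ℂˣ // ∀ s ∈ S i, ((ρ s : ℂˣ) : ℂ) = (ℓ i : ℂ)}
  have : ∀ i, Fintype (R i) := fun i => Fintype.ofFinite _
  let μ : ℝ := c * (#{g : ∀ i, G i | ∀ i, g i ∈ S i} * ∏ i, ℓ i)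
  let P : Multiplicative (ZMod n) × (∀ i, G i) → Prop :=
    fun s => IsUnit (s.1.toAdd) ∧ ∀ i, s.2 i ∈ S i
  let χ : (∀ i, R i) × (ZMod d)ˣ → ((Multiplicative (ZMod n) × ∀ i, G i) →* ℂ) :=
    fun j => prodChar n (a j.2) fun i => (j.1 i).1
  have hχ : Function.Injective χ := by
    rintro ⟨r, k⟩ ⟨r', k'⟩ h
    obtain ⟨h1, h2⟩ := prodChar_injective n h
    have h3 : r = r' := funext fun i => Subtype.ext (congrFun h2 i)
    exact Prod.ext h3 (ha h1)
  have hμ : ∀ j, (∑ s, if P s then χ j s⁻¹ else 0) = (μ : ℂ) := by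
    intro j
    let f : Multiplicative (ZMod n) → ℂ := fun x =>
      if IsUnit x.toAdd then ZMod.stdAddChar (-(a j.2 * x.toAdd)) else 0
    let p : (∀ i, G i) → ℂ := fun g => if ∀ i, g i ∈ S i then ∏ i, (ℓ i : ℂ) else 0
    -- On the connection set, `ρ i s⁻¹ = ℓ i` as `S i` is closed under inverses.
    have h1 : ∀ s, (if P s then χ j s⁻¹ else 0) = f s.1 * p s.2 := by
      intro s
      simp only [f, p]
      by_cases hu : IsUnit s.1.toAdd
      · by_cases hs : ∀ i, s.2 i ∈ S i
        · have hp : ∏ i, (((j.1 i).1 ((s⁻¹).2 i) : ℂˣ) : ℂ) = ∏ i, (ℓ i : ℂ) :=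
            Finset.prod_congr rfl fun i _ => (j.1 i).2 _ (hSinv i _ (hs i))
          rw [if_pos (show P s from ⟨hu, hs⟩), if_pos hu, if_pos hs, ← hp]
          simp only [χ, prodChar_apply, Prod.fst_inv, toAdd_inv, mul_neg]
        · rw [if_neg (fun h : P s => hs h.2), if_neg hs, mul_zero]
      · rw [if_neg (fun h : P s => hu h.1), if_neg hu, zero_mul]
    have h2 : ∑ x, f x = c := by
      simp only [f]
      rw [← hc j.2, ← Finset.sum_filter]
      symm
      refine Finset.sum_bij (fun (x : (ZMod n)ˣ) _ => Multiplicative.ofAdd (x : ZMod n))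
        ?_ ?_ ?_ ?_
      · intro x _
        simp
      · intro x _ y _ h
        exact Units.ext (Multiplicative.ofAdd.injective h)
      · intro x hx
        obtain ⟨y, hy⟩ := (Finset.mem_filter.mp hx).2
        exact ⟨y, Finset.mem_univ _, by rw [hy]; simp⟩
      · intro x _
        simp
    rw [Finset.sum_congr rfl fun s _ => h1 s, Fintype.sum_prod_type,
      ← Fintype.sum_mul_sum, h2]
    simp only [p]
    rw [← Finset.sum_filter, Finset.sum_const]
    simp [μ]
  let A : Matrix (ZMod n × ∀ i, G i) (ZMod n × ∀ i, G i) ℝ :=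
    X.adjMatrix ℝ - Matrix.diagonal fun _ => μ
  refine ⟨A, ?_, ?_, ?_⟩
  · exact (SimpleGraph.isSymm_adjMatrix X).sub (Matrix.isSymm_diagonal _)
  · intro u v huv
    simp [A, Matrix.diagonal_apply_ne _ huv, SimpleGraph.adjMatrix_apply]
  · have hcard : (∏ i, N i) * Nat.totient d = Fintype.card ((∀ i, R i) × (ZMod d)ˣ) := by
      rw [Fintype.card_prod, ZMod.card_units_eq_totient, Fintype.card_pi]
      congr 1
      exact Finset.prod_congr rfl fun i _ => by rw [hN i, Nat.card_eq_fintype_card]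
    rw [hcard]
    refine card_le_finrank_ker A (fun j => (χ j : (ZMod n × ∀ i, G i) → ℂ))
      ((linearIndependent_monoidHom _ ℂ).comp χ hχ) ?_
    intro j u
    have h := sum_char_div (χ j) P u
    rw [hμ j] at h
    have hadj : ∀ v : ZMod n × ∀ i, G i, (A u v : ℂ) * χ j v =
        (if X.Adj u v then χ j v else 0) - (if u = v then (μ : ℂ) * χ j v else 0) := by
      intro v
      simp only [A, Matrix.sub_apply, SimpleGraph.adjMatrix_apply, Matrix.diagonal_apply]
      split_ifs <;> simp [sub_mul]
    rw [Finset.sum_congr rfl fun v _ => hadj v, Finset.sum_sub_distrib,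
      Finset.sum_ite_eq, if_pos (Finset.mem_univ _)]
    refine sub_eq_zero.mpr (Eq.trans ?_ h)
    refine Fintype.sum_equiv (Equiv.prodCongr Multiplicative.ofAdd (Equiv.refl _)) _ _ fun v => ?_
    refine if_congr ((hX u v).trans ?_) rfl rfl
    refine and_congr Iff.rfl (forall_congr' fun i => ?_)
    rw [← div_eq_mul_inv]
    exact Iff.rfl
end
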